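/- arXiv:2007.11297 — 3 statements merged into one kernel-verified Lean document; each statement's English description precedes it below -/
import Mathlib

section
/- Let u be a C¹ strictly convex function on B_R(0) ⊂ ℝ² with u(0) = 0, Du(0) = 0, and let 𝒫 : B_R(0) → ℝ², 𝒫(x₁,x₂) = (∂_{x₁}u(x₁,x₂), x₂). Set m₀ := inf_{∂B_R(0)} u (the infimum of u over the boundary circle, taken as a limit from inside if necessary) and let b := sup_{B_R(0)}|Du|. If δ := min{ m₀/(2b), m₀/(2R) } > 0, then the disc B_δ(0) is contained in the image 𝒫(B_R(0)). -/
open Metric Set MeasureTheory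

noncomputable section

abbrev E2 : Type := EuclideanSpace ℝ (Fin 2)

/-- The point of `ℝ²` with coordinates `(a, b)`. -/
def pt (a b : ℝ) : E2 := (WithLp.equiv 2 (Fin 2 → ℝ)).symm ![a, b]

/-- The standard basis vectors of `ℝ²`. -/
def e2 (i : Fin 2) : E2 := EuclideanSpace.single i 1

/-- The Hessian matrix `D²u(x)`. -/
def hess (u : E2 → ℝ) (x : E2) : Matrix (Fin 2) (Fin 2) ℝ :=
  Matrix.of fun i j => iteratedFDeriv ℝ 2 u x ![e2 i, e2 j]

/-- The determinant of the Hessian, `det D²u(x)`. -/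
def detHess (u : E2 → ℝ) (x : E2) : ℝ := (hess u x).det

/-- The operator norm of a `2 × 2` real matrix. -/
def opNorm2 (M : Matrix (Fin 2) (Fin 2) ℝ) : ℝ :=
  ‖(Matrix.toEuclideanCLM (𝕜 := ℝ) M : E2 →L[ℝ] E2)‖

/-- The partial Legendre transform of `u` in the `e₁`-direction (relative to `B_R(0)`). -/
def pLeg (R : ℝ) (u : E2 → ℝ) (y : E2) : ℝ :=
  sSup ((fun x₁ => x₁ * y 0 - u (pt x₁ (y 1))) '' {x₁ : ℝ | pt x₁ (y 1) ∈ ball (0:E2) R})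

/-- The partial Legendre map `𝒫(x₁,x₂) = (∂_{x₁}u(x), x₂)`. -/
def Pmap (u : E2 → ℝ) (x : E2) : E2 := pt (fderiv ℝ u x (e2 0)) (x 1)

/-!
To solve `𝒫 x = y`, split `y = p + q` with `p` along the Legendre direction and `q` orthogonal to
it, and minimise `z ↦ u z - ⟪p, z⟫` over the slice of the closed ball through `q`. At `q` its value
is at most `b‖q‖`, while on the boundary it is at least `m₀ - R‖p‖`. When `b‖q‖ + R‖p‖ < m₀` the
minimum is therefore attained inside, and there the slice derivative of `u` equals `p`. Nothing is
special to one direction in the plane: any finite-dimensional subspace of a Hilbert space will do.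
-/

open scoped RealInnerProductSpace

section NormedSpace

variable {E F : Type*} [NormedAddCommGroup E] [NormedSpace ℝ E]
  [NormedAddCommGroup F] [NormedSpace ℝ F]

lemma norm_image_sub_le_of_diffContOnCl {f : E → F} {s : Set E} {C : ℝ} {x y : E}
    (hf : DiffContOnCl ℝ f s) (hso : IsOpen s) (hs : Convex ℝ s)
    (bound : ∀ z ∈ s, ‖fderiv ℝ f z‖ ≤ C) (hx : x ∈ s) (hy : y ∈ closure s) :
    ‖f y - f x‖ ≤ C * ‖y - x‖ := by
  have le_on_s : ∀ z ∈ s, ‖f z - f x‖ ≤ C * ‖z - x‖ := fun z hz =>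
    hs.norm_image_sub_le_of_norm_fderiv_le (fun w hw => hf.differentiableAt hso hw) bound hx hz
  exact le_on_closure le_on_s (hf.sub_const (f x)).continuousOn.norm (by fun_prop) hy

lemma exists_fderiv_apply_eq_zero_of_lt_frontier {f : E → ℝ} {s : Set E} {w : E}
    (V : Submodule ℝ E) [FiniteDimensional ℝ V] (hso : IsOpen s) (hsb : Bornology.IsBounded s)
    (hf : DiffContOnCl ℝ f s) (hw : w ∈ s)
    (hlt : ∀ z ∈ frontier s, z - w ∈ V → f w < f z) :
    ∃ x ∈ s, x - w ∈ V ∧ ∀ v ∈ V, fderiv ℝ f x v = 0 := by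
  let slice : V → E := fun v => w + v
  have slice_isometry : Isometry slice := (isometry_add_left w).comp isometry_subtype_coe
  have slice_compact : IsCompact (slice ⁻¹' closure s) :=
    isCompact_of_isClosed_isBounded (isClosed_closure.preimage slice_isometry.continuous)
      (slice_isometry.antilipschitz.isBounded_preimage hsb.closure)
  obtain ⟨v₀, hv₀, v₀_min⟩ : ∃ v₀ ∈ slice ⁻¹' s, IsLocalMin (f ∘ slice) v₀ := by
    refine slice_compact.exists_isLocalMin_mem_open (z := 0) (preimage_mono subset_closure)
      (hf.continuousOn.comp slice_isometry.continuous.continuousOn (mapsTo_preimage _ _))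
      (by simpa [slice] using subset_closure hw) (fun v hv => ?_)
      (hso.preimage slice_isometry.continuous)
    have slice_v_mem : slice v ∈ frontier s := by rwa [hso.frontier_eq]
    simpa [slice] using hlt (slice v) slice_v_mem (by simp [slice])
  have slice_deriv : HasFDerivAt slice V.subtypeL v₀ := V.subtypeL.hasFDerivAt.const_add w
  have deriv_zero : (fderiv ℝ f (slice v₀)).comp V.subtypeL = 0 :=
    v₀_min.hasFDerivAt_eq_zero
      ((hf.differentiableAt hso hv₀).hasFDerivAt.comp v₀ slice_deriv)
  exact ⟨slice v₀, hv₀, by simp [slice], fun v hv => DFunLike.congr_fun deriv_zero ⟨v, hv⟩⟩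

end NormedSpace

section Hilbert

variable {E : Type*} [NormedAddCommGroup E] [InnerProductSpace ℝ E] [CompleteSpace E]

lemma norm_gradient (f : E → ℝ) (x : E) : ‖gradient f x‖ = ‖fderiv ℝ f x‖ :=
  LinearIsometryEquiv.norm_map _ _

/-- The partial Legendre map of `u` in the directions of `V`: the component of a point along `V` is
replaced by that of the gradient, and the component orthogonal to `V` is kept. For
`V = ℝ × {0} ⊆ ℝ²` this is `(x₁, x₂) ↦ (∂₁u(x₁, x₂), x₂)`. -/
def partialLegendreMap (V : Submodule ℝ E) [V.HasOrthogonalProjection] (u : E → ℝ) (x : E) : E :=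
  V.starProjection (gradient u x) + Vᗮ.starProjection x

lemma partialLegendreMap_eq {V : Submodule ℝ E} [V.HasOrthogonalProjection] {u : E → ℝ} {x y : E}
    (hderiv : ∀ v ∈ V, fderiv ℝ u x v = ⟪y, v⟫) (hsub : x - y ∈ V) :
    partialLegendreMap V u x = y := by
  have along : V.starProjection (gradient u x) = V.starProjection y := by
    rw [← sub_eq_zero, ← map_sub, Submodule.starProjection_apply_eq_zero_iff,
      Submodule.mem_orthogonal']
    intro v hv
    rw [inner_sub_left, inner_gradient_left, hderiv v hv, sub_self]
  have across : Vᗮ.starProjection x = Vᗮ.starProjection y := by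
    rw [← sub_eq_zero, ← map_sub, Submodule.starProjection_apply_eq_zero_iff]
    exact V.le_orthogonal_orthogonal hsub
  rw [partialLegendreMap, along, across, Submodule.starProjection_add_starProjection_orthogonal]

variable {u : E → ℝ} {R b m : ℝ}

lemma le_add_mul_norm_of_norm_gradient_le (hR : 0 < R) (hu : DiffContOnCl ℝ u (ball 0 R))
    (hb : ∀ x ∈ ball (0 : E) R, ‖gradient u x‖ ≤ b) {x : E} (hx : x ∈ closedBall 0 R) :
    u x ≤ u 0 + b * ‖x‖ := by
  have sub_le := norm_image_sub_le_of_diffContOnCl hu isOpen_ball (convex_ball 0 R)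
    (fun z hz => norm_gradient u z ▸ hb z hz) (mem_ball_self hR) (closure_ball (0 : E) hR.ne' ▸ hx)
  rw [sub_zero] at sub_le
  linarith [Real.le_norm_self (u x - u 0)]

lemma mem_ball_of_mul_norm_lt (hR : 0 < R) (hu : DiffContOnCl ℝ u (ball 0 R))
    (hb : ∀ x ∈ ball (0 : E) R, ‖gradient u x‖ ≤ b) (hm : ∀ x ∈ sphere 0 R, u 0 + m ≤ u x)
    {x : E} (hx : b * ‖x‖ < m) : x ∈ ball 0 R := by
  rw [mem_ball_zero_iff]
  by_contra! hRx
  have hb₀ : 0 ≤ b := (norm_nonneg _).trans (hb 0 (mem_ball_self hR))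
  let z : E := (R / ‖x‖) • x
  have norm_z : ‖z‖ = R := by
    rw [norm_smul, norm_div, norm_norm, Real.norm_of_nonneg hR.le,
      div_mul_cancel₀ _ (hR.trans_le hRx).ne']
  have lower : u 0 + m ≤ u z := hm z (mem_sphere_zero_iff_norm.mpr norm_z)
  have upper : u z ≤ u 0 + b * R :=
    norm_z ▸ le_add_mul_norm_of_norm_gradient_le hR hu hb (mem_closedBall_zero_iff.mpr norm_z.le)
  linarith [mul_le_mul_of_nonneg_left hRx hb₀]

variable (V : Submodule ℝ E) [FiniteDimensional ℝ V]

lemma mem_image_partialLegendreMap (hR : 0 < R) (hu : DiffContOnCl ℝ u (ball 0 R))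
    (hb : ∀ x ∈ ball (0 : E) R, ‖gradient u x‖ ≤ b) (hm : ∀ x ∈ sphere 0 R, u 0 + m ≤ u x)
    {y : E} (hy : b * ‖Vᗮ.starProjection y‖ + R * ‖V.starProjection y‖ < m) :
    y ∈ partialLegendreMap V u '' ball 0 R := by
  set p := V.starProjection y
  set q := Vᗮ.starProjection y
  have p_add_q : p + q = y := V.starProjection_add_starProjection_orthogonal y
  have p_mem : p ∈ V := V.starProjection_apply_mem y
  have q_mem : q ∈ Vᗮ := Vᗮ.starProjection_apply_mem y
  have q_mem_ball : q ∈ ball 0 R :=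
    mem_ball_of_mul_norm_lt hR hu hb hm (by linarith [mul_nonneg hR.le (norm_nonneg p)])
  have lt_on_sphere : ∀ z ∈ sphere (0 : E) R, u q - ⟪p, q⟫ < u z - ⟪p, z⟫ := fun z hz => by
    have inner_le : ⟪p, z⟫ ≤ R * ‖p‖ := by
      simpa only [mem_sphere_zero_iff_norm.mp hz, mul_comm] using real_inner_le_norm p z
    calc u q - ⟪p, q⟫ = u q := by rw [V.inner_right_of_mem_orthogonal p_mem q_mem, sub_zero]
      _ ≤ u 0 + b * ‖q‖ :=
        le_add_mul_norm_of_norm_gradient_le hR hu hb (ball_subset_closedBall q_mem_ball)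
      _ < u 0 + m - R * ‖p‖ := by linarith
      _ ≤ u z - ⟪p, z⟫ := sub_le_sub (hm z hz) inner_le
  obtain ⟨x, x_mem, x_sub_q, critical⟩ := exists_fderiv_apply_eq_zero_of_lt_frontier V isOpen_ball
    isBounded_ball (hu.sub (innerSL ℝ p).differentiable.diffContOnCl) q_mem_ball
    fun z hz _ => lt_on_sphere z (frontier_ball (0 : E) hR.ne' ▸ hz)
  refine ⟨x, x_mem, partialLegendreMap_eq (fun v hv => ?_) ?_⟩
  · have deriv_eq : fderiv ℝ u x v - ⟪p, v⟫ = 0 := by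
      simpa only [fderiv_sub (hu.differentiableAt isOpen_ball x_mem)
        (innerSL ℝ p).differentiableAt, ContinuousLinearMap.fderiv, ContinuousLinearMap.sub_apply,
        innerSL_apply_apply] using critical v hv
    rw [← p_add_q, inner_add_left, V.inner_left_of_mem_orthogonal hv q_mem]
    linarith
  · rw [← p_add_q, sub_add_eq_sub_sub_swap]
    exact V.sub_mem x_sub_q p_mem

theorem ball_subset_partialLegendre_image_general (hR : 0 < R) (hu : DiffContOnCl ℝ u (ball 0 R))
    (hb : ∀ x ∈ ball (0 : E) R, ‖gradient u x‖ ≤ b) (hm : ∀ x ∈ sphere 0 R, u 0 + m ≤ u x)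
    (hδ : 0 < min (m / (2 * b)) (m / (2 * R))) :
    ball 0 (min (m / (2 * b)) (m / (2 * R))) ⊆ partialLegendreMap V u '' ball 0 R := by
  intro y hy
  obtain ⟨lt_div_b, lt_div_R⟩ := lt_min_iff.mp (mem_ball_zero_iff.mp hy)
  have hb₀ : 0 ≤ b := (norm_nonneg _).trans (hb 0 (mem_ball_self hR))
  have hb_pos : 0 < b := hb₀.lt_of_ne' fun b_eq => by simp [b_eq] at hδ
  rw [lt_div_iff₀ (by positivity)] at lt_div_b lt_div_R
  refine mem_image_partialLegendreMap V hR hu hb hm ?_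
  calc b * ‖Vᗮ.starProjection y‖ + R * ‖V.starProjection y‖ ≤ b * ‖y‖ + R * ‖y‖ := by
        gcongr <;> exact Submodule.norm_starProjection_apply_le _ y
    _ < m := by linarith

end Hilbert

lemma Pmap_eq_partialLegendreMap (u : E2 → ℝ) : Pmap u = partialLegendreMap (ℝ ∙ e2 0) u := by
  have norm_e2 : ‖e2 0‖ = 1 := by simp [e2]
  funext x
  rw [partialLegendreMap, Submodule.starProjection_orthogonal_val,
    Submodule.starProjection_unit_singleton ℝ norm_e2,
    Submodule.starProjection_unit_singleton ℝ norm_e2, inner_gradient_right]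
  ext i
  fin_cases i <;> simp [Pmap, pt, e2, EuclideanSpace.inner_single_left]

/-- Lemma 2.1: if u is C¹ and strictly convex on B_R(0) with
u(0) = 0, Du(0) = 0, m₀ = inf_{∂B_R} u (u extends continuously to the closed ball),
b bounds |Du| on B_R(0), and δ = min{m₀/(2b), m₀/(2R)} > 0, then
B_δ(0) ⊆ 𝒫(B_R(0)) where 𝒫(x₁,x₂) = (∂_{x₁}u(x), x₂). -/
theorem ball_subset_partialLegendre_image
    (R b m₀ : ℝ) (hR : 0 < R) (u : E2 → ℝ)
    (hu : ContDiffOn ℝ 1 u (ball (0:E2) R))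
    (hconv : StrictConvexOn ℝ (ball (0:E2) R) u)
    (hcont : ContinuousOn u (closedBall (0:E2) R))
    (hu0 : u 0 = 0)
    (hDu0 : gradient u 0 = 0)
    (hm₀ : m₀ = sInf (u '' sphere (0:E2) R))
    (hb : ∀ x ∈ ball (0:E2) R, ‖gradient u x‖ ≤ b)
    (hδ : 0 < min (m₀ / (2 * b)) (m₀ / (2 * R))) :
    ball (0:E2) (min (m₀ / (2 * b)) (m₀ / (2 * R))) ⊆ Pmap u '' ball (0:E2) R := by
  rw [Pmap_eq_partialLegendreMap]
  refine ball_subset_partialLegendre_image_general _ hR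
    (.mk_ball (hu.differentiableOn one_ne_zero) hcont) hb (fun x hx => ?_) hδ
  simpa only [hu0, zero_add, hm₀] using csInf_le ((isCompact_sphere 0 R).bddBelow_image
    (hcont.mono sphere_subset_closedBall)) (mem_image_of_mem u hx)
end
end

section
/- Let u be a C² strictly convex function on B_R(0) ⊂ ℝ² with ∂_{x₁x₁}u > 0, solving det D²u = f with f > 0, and let u* be its partial Legendre transform in the e₁-direction with associated map 𝒫(x₁,x₂) = (∂_{x₁}u(x₁,x₂), x₂). Then u* is twice differentiable on the open set 𝒫(B_R(0)) and for every x ∈ B_R(0), at the point y = 𝒫(x): ∂_{y₁y₁}u*(y) = 1/∂_{x₁x₁}u(x), ∂_{y₁y₂}u*(y) = −∂_{x₁x₂}u(x)/∂_{x₁x₁}u(x), and ∂_{y₂y₂}u*(y) = −f(x)/∂_{x₁x₁}u(x) = −det D²u(x)/∂_{x₁x₁}u(x). -/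
open Metric Set MeasureTheory

noncomputable section

/-! On a horizontal line `u` is convex, so the supremum defining `u*` at `𝒫(x)` is attained at `x₁`:
`u*(𝒫(x)) = x₁ ∂₁u(x) - u(x)`. The derivative of `𝒫` is invertible because `∂₁₁u ≠ 0`, so the
derivative of any `F` with `F ∘ 𝒫` known is obtained by dividing by `D𝒫`. Applied to `F = u*` this
gives `∇u*(𝒫(x)) = (x₁, -∂₂u(x))`; applied to `F = ∇u*` it gives the Hessian of `u*`. -/

section Calculus

open Filter Topology

lemma tangent_le_of_convexOn {S : Set ℝ} {f : ℝ → ℝ} {f' x y : ℝ} (hf : ConvexOn ℝ S f)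
    (hx : x ∈ S) (hy : y ∈ S) (hf' : HasDerivAt f f' x) : f x + f' * (y - x) ≤ f y := by
  rcases lt_trichotomy x y with hxy | rfl | hyx
  · have slope_ge := hf.le_slope_of_hasDerivAt hx hy hxy hf'
    rw [slope_def_field, le_div_iff₀ (sub_pos.2 hxy)] at slope_ge
    linarith
  · simp
  · have slope_le := hf.slope_le_of_hasDerivAt hy hx hyx hf'
    rw [slope_def_field, div_le_iff₀ (sub_pos.2 hyx)] at slope_le
    linarith

lemma hasStrictFDerivAt_fderiv_apply {𝕜 E F : Type*} [RCLike 𝕜] [NormedAddCommGroup E]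
    [NormedSpace 𝕜 E] [NormedAddCommGroup F] [NormedSpace 𝕜 F] {u : E → F} {x : E}
    (hu : ContDiffAt 𝕜 2 u x) (v : E) :
    HasStrictFDerivAt (fun z ↦ fderiv 𝕜 u z v) ((fderiv 𝕜 (fderiv 𝕜 u) x).flip v) x :=
  have hDu : ContDiffAt 𝕜 1 (fderiv 𝕜 u) x := hu.fderiv_right (by norm_num)
  (ContinuousLinearMap.apply 𝕜 F v).hasStrictFDerivAt.comp x (hDu.hasStrictFDerivAt one_ne_zero)

lemma hasFDerivAt_of_comp_eventuallyEq {𝕜 E F G : Type*} [NontriviallyNormedField 𝕜]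
    [NormedAddCommGroup E] [NormedSpace 𝕜 E] [CompleteSpace E] [NormedAddCommGroup F]
    [NormedSpace 𝕜 F] [NormedAddCommGroup G] [NormedSpace 𝕜 G]
    {P : E → F} {P' : E ≃L[𝕜] F} {x : E}
    (hP : HasStrictFDerivAt P (P' : E →L[𝕜] F) x) {f : F → G} {h : E → G} {h' : E →L[𝕜] G}
    (hh : HasFDerivAt h h' x) (hfP : f ∘ P =ᶠ[𝓝 x] h) :
    HasFDerivAt f (h'.comp (P'.symm : F →L[𝕜] E)) (P x) := by
  set Q := hP.localInverse P P' x
  have hQx : Q (P x) = x := hP.localInverse_apply_image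
  have hfQ : f =ᶠ[𝓝 (P x)] h ∘ Q := by
    filter_upwards [hP.localInverse_tendsto.eventually hfP, hP.eventually_right_inverse]
      with y hy hPQ
    rw [Function.comp_apply, ← hy, Function.comp_apply, hPQ]
  have hhQ : HasFDerivAt h h' (Q (P x)) := by rwa [hQx]
  exact (hhQ.comp (P x) hP.to_localInverse.hasFDerivAt).congr_of_eventuallyEq hfQ

end Calculus

section Coordinates

@[simp] lemma pt_apply_zero (a b : ℝ) : pt a b 0 = a := by simp [pt]

@[simp] lemma pt_apply_one (a b : ℝ) : pt a b 1 = b := by simp [pt]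

@[simp] lemma pt_eta (x : E2) : pt (x 0) (x 1) = x := by
  ext i; fin_cases i <;> simp

@[simp] lemma e2_apply (i j : Fin 2) : e2 i j = if j = i then 1 else 0 := by
  simp [e2]

lemma pt_eq_smul_add_smul (a b : ℝ) : pt a b = a • e2 0 + b • e2 1 := by
  ext i; fin_cases i <;> simp

lemma map_eq_smul_add_smul {F : Type*} [AddCommGroup F] [Module ℝ F] [TopologicalSpace F]
    (L : E2 →L[ℝ] F) (k : E2) : L k = k 0 • L (e2 0) + k 1 • L (e2 1) := by
  conv_lhs => rw [← pt_eta k, pt_eq_smul_add_smul, map_add, map_smul, map_smul]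

/-- The coordinate functional `x ↦ xᵢ` on the plane. -/
def coord (i : Fin 2) : E2 →L[ℝ] ℝ := EuclideanSpace.proj i

@[simp] lemma coord_apply (i : Fin 2) (x : E2) : coord i x = x i := rfl

/-- The `j`-th column of `D²u(x)` as a functional. For `u` of class `C²` it is the differential of
`∂ⱼu` at `x`. -/
def hessCol (u : E2 → ℝ) (x : E2) (j : Fin 2) : E2 →L[ℝ] ℝ :=
  (fderiv ℝ (fderiv ℝ u) x).flip (e2 j)

lemma hess_eq_hessCol (u : E2 → ℝ) (x : E2) (i j : Fin 2) :
    hess u x i j = hessCol u x j (e2 i) := by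
  simp [hess, hessCol, iteratedFDeriv_two_apply]

lemma hessCol_e2_ne_zero {u : E2 → ℝ} {x : E2} {i j : Fin 2} (h : hess u x i j ≠ 0) :
    hessCol u x j (e2 i) ≠ 0 := by
  rwa [← hess_eq_hessCol]

lemma hasStrictFDerivAt_partial {u : E2 → ℝ} {x : E2} (hu : ContDiffAt ℝ 2 u x) (j : Fin 2) :
    HasStrictFDerivAt (fun z ↦ fderiv ℝ u z (e2 j)) (hessCol u x j) x :=
  hasStrictFDerivAt_fderiv_apply hu (e2 j)

/-- The linear change of coordinates `k ↦ (ℓ k, k₂)`. The derivative of `Pmap u` has this form. -/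
def firstCoordEquiv (ℓ : E2 →L[ℝ] ℝ) (hℓ : ℓ (e2 0) ≠ 0) : E2 ≃L[ℝ] E2 :=
  LinearEquiv.toContinuousLinearEquiv
    { toFun k := pt (ℓ k) (k 1)
      map_add' k k' := by ext i; fin_cases i <;> simp
      map_smul' c k := by ext i; fin_cases i <;> simp
      invFun h := pt ((h 0 - h 1 * ℓ (e2 1)) / ℓ (e2 0)) (h 1)
      left_inv k := by
        ext i; fin_cases i
        · simp [map_eq_smul_add_smul ℓ k, hℓ]
        · simp
      right_inv h := by
        ext i; fin_cases i
        · simp [map_eq_smul_add_smul ℓ (pt _ _), hℓ]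
        · simp }

lemma firstCoordEquiv_apply (ℓ : E2 →L[ℝ] ℝ) (hℓ : ℓ (e2 0) ≠ 0) (k : E2) :
    firstCoordEquiv ℓ hℓ k = pt (ℓ k) (k 1) := rfl

lemma firstCoordEquiv_symm_apply (ℓ : E2 →L[ℝ] ℝ) (hℓ : ℓ (e2 0) ≠ 0) (h : E2) :
    (firstCoordEquiv ℓ hℓ).symm h = pt ((h 0 - h 1 * ℓ (e2 1)) / ℓ (e2 0)) (h 1) := rfl

lemma hasStrictFDerivAt_Pmap {u : E2 → ℝ} {x : E2} (hu : ContDiffAt ℝ 2 u x)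
    (h11 : hessCol u x 0 (e2 0) ≠ 0) :
    HasStrictFDerivAt (Pmap u) (firstCoordEquiv (hessCol u x 0) h11 : E2 →L[ℝ] E2) x := by
  rw [hasStrictFDerivAt_euclidean, Fin.forall_fin_two]
  simp only [Pmap, pt_apply_zero, pt_apply_one]
  exact ⟨hasStrictFDerivAt_partial hu 0, (coord 1).hasStrictFDerivAt⟩

end Coordinates

section HorizontalSlice

/-- The slice `{t | (t, b) ∈ Ω}` of a planar set by a horizontal line. -/
def horizontalSlice (Ω : Set E2) (b : ℝ) : Set ℝ := {t | pt t b ∈ Ω}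

lemma hasDerivAt_pt_left (t b : ℝ) : HasDerivAt (fun s ↦ pt s b) (e2 0) t := by
  simpa only [pt_eq_smul_add_smul, id, one_smul] using
    ((hasDerivAt_id t).smul_const (e2 0)).add_const (b • e2 1)

lemma convex_horizontalSlice {Ω : Set E2} (hΩ : Convex ℝ Ω) (b : ℝ) :
    Convex ℝ (horizontalSlice Ω b) := by
  intro s hs t ht α β hα hβ hαβ
  have pt_combo : pt (α • s + β • t) b = α • pt s b + β • pt t b := by
    ext i; fin_cases i
    · simp
    · simp [← add_mul, hαβ]
  change pt (α • s + β • t) b ∈ Ω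
  rw [pt_combo]
  exact hΩ hs ht hα hβ hαβ

lemma convexOn_horizontalSlice {Ω : Set E2} (hΩ : IsOpen Ω) {b : ℝ}
    (hΩb : Convex ℝ (horizontalSlice Ω b)) {u : E2 → ℝ} (hu : ContDiffOn ℝ 2 u Ω)
    (h11 : ∀ x ∈ Ω, 0 ≤ hess u x 0 0) :
    ConvexOn ℝ (horizontalSlice Ω b) fun t ↦ u (pt t b) := by
  have huAt : ∀ t ∈ horizontalSlice Ω b, ContDiffAt ℝ 2 u (pt t b) := fun t ht ↦
    hu.contDiffAt (hΩ.mem_nhds ht)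
  have hderiv : ∀ t ∈ horizontalSlice Ω b,
      HasDerivAt (fun t ↦ u (pt t b)) (fderiv ℝ u (pt t b) (e2 0)) t := fun t ht ↦
    ((huAt t ht).differentiableAt two_ne_zero).hasFDerivAt.comp_hasDerivAt t
      (hasDerivAt_pt_left t b)
  have hderiv2 : ∀ t ∈ horizontalSlice Ω b,
      HasDerivAt (fun t ↦ fderiv ℝ u (pt t b) (e2 0)) (hess u (pt t b) 0 0) t := fun t ht ↦ by
    rw [hess_eq_hessCol]
    exact (hasStrictFDerivAt_partial (huAt t ht) 0).hasFDerivAt.comp_hasDerivAt t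
      (hasDerivAt_pt_left t b)
  exact convexOn_of_hasDerivWithinAt2_nonneg hΩb
    (fun t ht ↦ (hderiv t ht).continuousAt.continuousWithinAt)
    (fun t ht ↦ (hderiv t (interior_subset ht)).hasDerivWithinAt)
    (fun t ht ↦ (hderiv2 t (interior_subset ht)).hasDerivWithinAt)
    (fun t ht ↦ h11 (pt t b) (interior_subset (s := horizontalSlice Ω b) ht))

end HorizontalSlice

section PartialLegendre

open Filter Topology

/-- The partial Legendre transform in the `e₁`-direction of a function on a planar domain `Ω`. It is
`0` by convention of `sSup` where the supremum is infinite or the slice of `Ω` is empty. -/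
def partialLegendre (Ω : Set E2) (u : E2 → ℝ) (y : E2) : ℝ :=
  sSup ((fun t ↦ t * y 0 - u (pt t (y 1))) '' horizontalSlice Ω (y 1))

/-- The functional `(x₁, -∂₂u(x))`, which is the gradient of the partial Legendre transform of `u`
at `Pmap u x`. -/
def partialLegendreGradient (u : E2 → ℝ) (x : E2) : E2 →L[ℝ] ℝ :=
  x 0 • coord 0 - fderiv ℝ u x (e2 1) • coord 1

variable {Ω : Set E2} {u : E2 → ℝ} {x : E2}

lemma partialLegendre_Pmap (hΩ : IsOpen Ω) (hΩb : Convex ℝ (horizontalSlice Ω (x 1)))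
    (hu : ContDiffOn ℝ 2 u Ω) (h11 : ∀ x ∈ Ω, 0 ≤ hess u x 0 0) (hx : x ∈ Ω) :
    partialLegendre Ω u (Pmap u x) = x 0 * fderiv ℝ u x (e2 0) - u x := by
  have hx0 : x 0 ∈ horizontalSlice Ω (x 1) := by simpa [horizontalSlice] using hx
  have hderiv : HasDerivAt (fun t ↦ u (pt t (x 1))) (fderiv ℝ u x (e2 0)) (x 0) :=
    HasFDerivAt.comp_hasDerivAt (x 0) (by simpa using
      ((hu.contDiffAt (hΩ.mem_nhds hx)).differentiableAt two_ne_zero).hasFDerivAt)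
      (hasDerivAt_pt_left (x 0) (x 1))
  simp only [partialLegendre, Pmap, pt_apply_zero, pt_apply_one]
  refine IsGreatest.csSup_eq ⟨⟨x 0, hx0, by simp⟩, ?_⟩
  rintro _ ⟨t, ht, rfl⟩
  have tangent_le :=
    tangent_le_of_convexOn (convexOn_horizontalSlice hΩ hΩb hu h11) hx0 ht hderiv
  simp only [pt_eta] at tangent_le
  linarith

lemma hasFDerivAt_coord_mul_partial_sub (hu : ContDiffAt ℝ 2 u x)
    (h11 : hessCol u x 0 (e2 0) ≠ 0) :
    HasFDerivAt (fun z ↦ z 0 * fderiv ℝ u z (e2 0) - u z)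
      ((partialLegendreGradient u x).comp
        (firstCoordEquiv (hessCol u x 0) h11 : E2 →L[ℝ] E2)) x := by
  refine HasFDerivAt.congr_fderiv
    (((coord 0).hasFDerivAt.mul (hasStrictFDerivAt_partial hu 0).hasFDerivAt).sub
      (hu.differentiableAt two_ne_zero).hasFDerivAt) ?_
  ext k
  simp only [sub_apply, add_apply, smul_apply, ContinuousLinearMap.comp_apply,
    ContinuousLinearEquiv.coe_coe, coord_apply, smul_eq_mul, partialLegendreGradient,
    firstCoordEquiv_apply, pt_apply_zero, pt_apply_one, map_eq_smul_add_smul (fderiv ℝ u x) k]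
  ring

lemma hasFDerivAt_partialLegendre (hΩ : IsOpen Ω) (hΩb : ∀ b, Convex ℝ (horizontalSlice Ω b))
    (hu : ContDiffOn ℝ 2 u Ω) (h11 : ∀ x ∈ Ω, 0 < hess u x 0 0) (hx : x ∈ Ω) :
    HasFDerivAt (partialLegendre Ω u) (partialLegendreGradient u x) (Pmap u x) := by
  have huAt := hu.contDiffAt (hΩ.mem_nhds hx)
  have h11x := hessCol_e2_ne_zero (h11 x hx).ne'
  have hvalue : partialLegendre Ω u ∘ Pmap u =ᶠ[𝓝 x] fun z ↦ z 0 * fderiv ℝ u z (e2 0) - u z := by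
    filter_upwards [hΩ.mem_nhds hx] with z hz
    exact partialLegendre_Pmap hΩ (hΩb _) hu (fun z hz ↦ (h11 z hz).le) hz
  simpa [ContinuousLinearMap.comp_assoc] using hasFDerivAt_of_comp_eventuallyEq
    (hasStrictFDerivAt_Pmap huAt h11x) (hasFDerivAt_coord_mul_partial_sub huAt h11x) hvalue

lemma hasFDerivAt_partialLegendreGradient (hu : ContDiffAt ℝ 2 u x) :
    HasFDerivAt (partialLegendreGradient u)
      ((coord 0).smulRight (coord 0) - (hessCol u x 1).smulRight (coord 1)) x :=
  ((coord 0).hasFDerivAt.smul_const (coord 0)).sub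
    ((hasStrictFDerivAt_partial hu 1).hasFDerivAt.smul_const (coord 1))

lemma hasFDerivAt_fderiv_partialLegendre (hΩ : IsOpen Ω)
    (hΩb : ∀ b, Convex ℝ (horizontalSlice Ω b)) (hu : ContDiffOn ℝ 2 u Ω)
    (h11 : ∀ x ∈ Ω, 0 < hess u x 0 0) (hx : x ∈ Ω) :
    HasFDerivAt (fderiv ℝ (partialLegendre Ω u))
      (((coord 0).smulRight (coord 0) - (hessCol u x 1).smulRight (coord 1)).comp
        ((firstCoordEquiv (hessCol u x 0) (hessCol_e2_ne_zero (h11 x hx).ne')).symm :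
          E2 →L[ℝ] E2)) (Pmap u x) := by
  have huAt := hu.contDiffAt (hΩ.mem_nhds hx)
  refine hasFDerivAt_of_comp_eventuallyEq (hasStrictFDerivAt_Pmap huAt _)
    (hasFDerivAt_partialLegendreGradient huAt) ?_
  filter_upwards [hΩ.mem_nhds hx] with z hz
  exact (hasFDerivAt_partialLegendre hΩ hΩb hu h11 hz).fderiv

lemma hess_partialLegendre_Pmap (hΩ : IsOpen Ω) (hΩb : ∀ b, Convex ℝ (horizontalSlice Ω b))
    (hu : ContDiffOn ℝ 2 u Ω) (h11 : ∀ x ∈ Ω, 0 < hess u x 0 0) (hx : x ∈ Ω) :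
    hess (partialLegendre Ω u) (Pmap u x) =
      !![1 / hess u x 0 0, -(hess u x 0 1) / hess u x 0 0;
        -(hess u x 1 0) / hess u x 0 0, -(detHess u x) / hess u x 0 0] := by
  have h11x := hessCol_e2_ne_zero (h11 x hx).ne'
  have hess_formula (i j : Fin 2) : hess (partialLegendre Ω u) (Pmap u x) i j =
      (firstCoordEquiv (hessCol u x 0) h11x).symm (e2 i) 0 * e2 j 0 -
        hessCol u x 1 ((firstCoordEquiv (hessCol u x 0) h11x).symm (e2 i)) * e2 j 1 := by
    rw [hess_eq_hessCol, hessCol,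
      (hasFDerivAt_fderiv_partialLegendre hΩ hΩb hu h11 hx).fderiv]
    simp
  ext i j
  rw [hess_formula, map_eq_smul_add_smul (hessCol u x 1)]
  simp only [detHess, Matrix.det_fin_two, hess_eq_hessCol, firstCoordEquiv_symm_apply]
  fin_cases i <;> fin_cases j
  · simp
  · simp [div_eq_inv_mul]
  · simp [neg_div]
  · simp only [Fin.mk_one, e2_apply, zero_ne_one, ↓reduceIte, one_mul, zero_sub, pt_apply_zero,
      mul_zero, smul_eq_mul, pt_apply_one, mul_one, Matrix.of_apply, Matrix.cons_val',
      Matrix.cons_val_one, Matrix.cons_val_fin_one]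
    field_simp
    ring

lemma pLeg_eq_partialLegendre (R : ℝ) (u : E2 → ℝ) :
    pLeg R u = partialLegendre (ball 0 R) u := rfl

end PartialLegendre

theorem partialLegendre_second_derivatives_general {Ω : Set E2} (hΩ : IsOpen Ω)
    (hΩb : ∀ b, Convex ℝ (horizontalSlice Ω b)) {u : E2 → ℝ} (hu : ContDiffOn ℝ 2 u Ω)
    (h11 : ∀ x ∈ Ω, 0 < hess u x 0 0) :
    (∀ y ∈ Pmap u '' Ω,
      DifferentiableAt ℝ (partialLegendre Ω u) y ∧
      DifferentiableAt ℝ (fderiv ℝ (partialLegendre Ω u)) y) ∧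
    ∀ x ∈ Ω,
      hess (partialLegendre Ω u) (Pmap u x) =
        !![1 / hess u x 0 0, -(hess u x 0 1) / hess u x 0 0;
          -(hess u x 1 0) / hess u x 0 0, -(detHess u x) / hess u x 0 0] := by
  refine ⟨?_, fun x hx ↦ hess_partialLegendre_Pmap hΩ hΩb hu h11 hx⟩
  rintro _ ⟨x, hx, rfl⟩
  exact ⟨(hasFDerivAt_partialLegendre hΩ hΩb hu h11 hx).differentiableAt,
    (hasFDerivAt_fderiv_partialLegendre hΩ hΩb hu h11 hx).differentiableAt⟩

/-- for u C² strictly convex on B_R(0) with ∂_{x₁x₁}u > 0 and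
det D²u = f > 0, the partial Legendre transform u* is twice differentiable on
𝒫(B_R(0)) and at y = 𝒫(x): ∂_{y₁y₁}u* = 1/∂_{x₁x₁}u, ∂_{y₁y₂}u* = −∂_{x₁x₂}u/∂_{x₁x₁}u,
∂_{y₂y₂}u* = −f/∂_{x₁x₁}u = −det D²u/∂_{x₁x₁}u. -/
theorem partialLegendre_second_derivatives
    (R : ℝ) (hR : 0 < R) (u f : E2 → ℝ)
    (hu : ContDiffOn ℝ 2 u (ball (0:E2) R))
    (hconv : StrictConvexOn ℝ (ball (0:E2) R) u)
    (h11 : ∀ x ∈ ball (0:E2) R, 0 < hess u x 0 0)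
    (hMA : ∀ x ∈ ball (0:E2) R, detHess u x = f x)
    (hfpos : ∀ x ∈ ball (0:E2) R, 0 < f x) :
    (∀ y ∈ Pmap u '' ball (0:E2) R,
      DifferentiableAt ℝ (pLeg R u) y ∧
      DifferentiableAt ℝ (fun z => fderiv ℝ (pLeg R u) z) y) ∧
    ∀ x ∈ ball (0:E2) R,
      hess (pLeg R u) (Pmap u x) 0 0 = 1 / hess u x 0 0 ∧
      hess (pLeg R u) (Pmap u x) 0 1 = -(hess u x 0 1) / hess u x 0 0 ∧
      hess (pLeg R u) (Pmap u x) 1 1 = -(f x) / hess u x 0 0 ∧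
      hess (pLeg R u) (Pmap u x) 1 1 = -(detHess u x) / hess u x 0 0 := by
  obtain ⟨hdiff, hhess⟩ := partialLegendre_second_derivatives_general isOpen_ball
    (convex_horizontalSlice (convex_ball (0 : E2) R)) hu h11
  rw [pLeg_eq_partialLegendre]
  exact ⟨hdiff, fun x hx ↦ by simp [hhess x hx, hMA x hx]⟩
end
end

section
/- Let u be a C² convex function on a neighborhood of the closed disc B̄_t(0) ⊂ ℝ² satisfying det D²u ≥ C₀⁻¹ > 0, u(0) = 0, Du(0) = 0, and u > 0 on B̄_t(0) \ {0}. Assume the minimum m := min_{∂B_t(0)} u is attained at the point (t,0), and let b := sup_{B̄_t(0)}|Du|. Then m ≥ (b·t/2) / ( exp(128·C₀·b²/t²) − 1 ). -/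
open Metric Set MeasureTheory

noncomputable section

/-!
Let `e`, `f` be orthonormal and suppose `∂ₑₑu · ∂_ffu ≥ δ`, as Hadamard's inequality gives when
`det D²u ≥ δ`. By convexity `u ≤ m := u(te)` on the segment from `0` to `te`, so `0 ≤ u ≤ m + by` on
the parallel segment at height `y`. A convex function with values in `[0, K]` on an interval of
length `3h` has derivative increasing by at most `2K/h` over the middle third. Hence
`∫ ∂ₑₑu dx ≤ 2(m + by)/h` there, and Cauchy–Schwarz yields `∫ ∂_ffu dx ≥ δh³ / (2(m + by))`.
Integrating over `0 ≤ y ≤ l`, the right side produces `log ((m + bl)/m)`, while integrating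
`∂_ffu` first in `y` shows that the left side is at most `2bh`. The rectangle with `h = t/4` and
`l = t/2` lies in the ball of radius `t`.
-/

lemma convexOn_comp_line {E : Type*} [AddCommGroup E] [Module ℝ E] {u : E → ℝ} {Ω : Set E}
    (hu : ConvexOn ℝ Ω u) (p v : E) :
    ConvexOn ℝ ((fun r : ℝ => p + r • v) ⁻¹' Ω) (fun r => u (p + r • v)) := by
  have hline : (fun r : ℝ => p + r • v) = AffineMap.lineMap p (p + v) := by
    funext r
    simp [AffineMap.lineMap_apply, add_comm]
  have hcomp := hu.comp_affineMap (AffineMap.lineMap p (p + v) : ℝ →ᵃ[ℝ] E)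
  rwa [← hline] at hcomp

section Lines

variable {E F : Type*} [NormedAddCommGroup E] [NormedSpace ℝ E]
  [NormedAddCommGroup F] [NormedSpace ℝ F] {u : E → ℝ} {Ω : Set E} {p v : E} {s : ℝ}

/-- The pure second directional derivative `∂ᵥᵥ u(x) = D²u(x)(v, v)`; it takes a junk value where
`u` is not twice differentiable. -/
def secondDirDeriv (u : E → ℝ) (x v : E) : ℝ := fderiv ℝ (fderiv ℝ u) x v v

lemma hasDerivAt_comp_line {g : E → F} (hg : DifferentiableAt ℝ g (p + s • v)) :
    HasDerivAt (fun r : ℝ => g (p + r • v)) (fderiv ℝ g (p + s • v) v) s := by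
  have hline : HasDerivAt (fun r : ℝ => p + r • v) v s := by
    simpa using ((hasDerivAt_id s).smul_const v).const_add p
  exact hg.hasFDerivAt.comp_hasDerivAt s hline

lemma hasDerivAt_fderiv_comp_line (hu : DifferentiableAt ℝ (fderiv ℝ u) (p + s • v)) :
    HasDerivAt (fun r : ℝ => fderiv ℝ u (p + r • v) v) (secondDirDeriv u (p + s • v) v) s := by
  simpa [secondDirDeriv] using (hasDerivAt_comp_line hu).clm_apply (hasDerivAt_const s v)

lemma secondDirDeriv_nonneg_of_convexOn (hΩ : IsOpen Ω) (hconv : ConvexOn ℝ Ω u)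
    (hdiff : DifferentiableOn ℝ u Ω) {x : E} (hx : x ∈ Ω)
    (hx' : DifferentiableAt ℝ (fderiv ℝ u) x) (v : E) : 0 ≤ secondDirDeriv u x v := by
  set S : Set ℝ := (fun r : ℝ => x + r • v) ⁻¹' Ω
  have hS : IsOpen S := hΩ.preimage (by fun_prop)
  have h0S : (0 : ℝ) ∈ S := by simpa [S] using hx
  have hderiv : ∀ r ∈ S, HasDerivAt (fun r : ℝ => u (x + r • v)) (fderiv ℝ u (x + r • v) v) r :=
    fun r hr => hasDerivAt_comp_line (hdiff.differentiableAt (hΩ.mem_nhds hr))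
  have hmono : MonotoneOn (fun r : ℝ => fderiv ℝ u (x + r • v) v) S :=
    ((convexOn_comp_line hconv x v).monotoneOn_derivWithin fun r hr =>
      (hderiv r hr).differentiableAt.differentiableWithinAt).congr fun r hr =>
        (hderiv r hr).hasDerivWithinAt.derivWithin (hS.uniqueDiffWithinAt hr)
  have hsecond : HasDerivAt (fun r : ℝ => fderiv ℝ u (x + r • v) v) (secondDirDeriv u x v) 0 := by
    simpa using hasDerivAt_fderiv_comp_line (p := x) (s := 0) (by simpa using hx')
  simpa [hsecond.hasDerivWithinAt.derivWithin (hS.uniqueDiffWithinAt h0S)]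
    using hmono.derivWithin_nonneg (x := 0)

lemma differentiableOn_fderiv_of_contDiffOn_two (hΩ : IsOpen Ω) (hu : ContDiffOn ℝ 2 u Ω) :
    DifferentiableOn ℝ (fderiv ℝ u) Ω :=
  (hu.fderiv_of_isOpen (m := 1) hΩ (by norm_num)).differentiableOn (by norm_num)

lemma continuousOn_secondDirDeriv (hΩ : IsOpen Ω) (hu : ContDiffOn ℝ 2 u Ω) (v : E) :
    ContinuousOn (fun x => secondDirDeriv u x v) Ω :=
  (((hu.fderiv_of_isOpen (m := 1) hΩ (by norm_num)).continuousOn_fderiv_of_isOpen hΩ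
    le_rfl).clm_apply continuousOn_const).clm_apply continuousOn_const

end Lines

section Integrals

lemma sq_integral_le_integral_mul_integral {α : Type*} [MeasurableSpace α] {μ : Measure α}
    {r p q : α → ℝ} (hr : Integrable r μ) (hp : Integrable p μ) (hq : Integrable q μ)
    (hp0 : 0 ≤ᵐ[μ] p) (hq0 : 0 ≤ᵐ[μ] q) (h : ∀ᵐ x ∂μ, r x ^ 2 ≤ p x * q x) :
    (∫ x, r x ∂μ) ^ 2 ≤ (∫ x, p x ∂μ) * ∫ x, q x ∂μ := by
  have hquad : ∀ k : ℝ, 0 ≤ (∫ x, p x ∂μ) * (k * k) + (2 * ∫ x, r x ∂μ) * k + ∫ x, q x ∂μ := by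
    intro k
    have hpoint : 0 ≤ᵐ[μ] fun x => p x * (k * k) + 2 * r x * k + q x := by
      filter_upwards [hp0, hq0, h] with x hpx hqx hx
      have hpx : 0 ≤ p x := hpx
      rcases hpx.eq_or_lt with hzero | hpos
      · have : r x = 0 := by nlinarith
        simpa [← hzero, this] using hqx
      · refine nonneg_of_mul_nonneg_right (a := p x) ?_ hpos
        nlinarith [sq_nonneg (p x * k + r x)]
    have hint := integral_nonneg_of_ae hpoint
    have hpk : Integrable (fun x => p x * (k * k)) μ := hp.mul_const _
    have hrk : Integrable (fun x => 2 * r x * k) μ := (hr.const_mul 2).mul_const k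
    have hpkrk : Integrable (fun x => p x * (k * k) + 2 * r x * k) μ := hpk.add hrk
    rwa [integral_add hpkrk hq, integral_add hpk hrk, integral_mul_const,
      integral_mul_const, integral_const_mul] at hint
  have hdiscrim := discrim_le_zero hquad
  rw [discrim] at hdiscrim
  linarith

lemma mul_sq_sub_le_integral_mul_integral {p q : ℝ → ℝ} {a b δ : ℝ} (hab : a ≤ b) (hδ : 0 ≤ δ)
    (hp : ContinuousOn p (Icc a b)) (hq : ContinuousOn q (Icc a b))
    (hp0 : ∀ x ∈ Icc a b, 0 ≤ p x) (hq0 : ∀ x ∈ Icc a b, 0 ≤ q x)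
    (h : ∀ x ∈ Icc a b, δ ≤ p x * q x) :
    δ * (b - a) ^ 2 ≤ (∫ x in a..b, p x) * ∫ x in a..b, q x := by
  have hmem : ∀ᵐ x ∂volume.restrict (Ioc a b), x ∈ Icc a b :=
    (ae_restrict_mem measurableSet_Ioc).mono fun x hx => Ioc_subset_Icc_self hx
  have hcs := sq_integral_le_integral_mul_integral (μ := volume.restrict (Ioc a b))
    (integrable_const √δ) (hp.integrableOn_Icc.mono_set Ioc_subset_Icc_self)
    (hq.integrableOn_Icc.mono_set Ioc_subset_Icc_self) (hmem.mono hp0) (hmem.mono hq0)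
    (hmem.mono fun x hx => by simpa only [Real.sq_sqrt hδ] using h x hx)
  rw [← intervalIntegral.integral_of_le hab, ← intervalIntegral.integral_of_le hab,
    ← intervalIntegral.integral_of_le hab, intervalIntegral.integral_const, smul_eq_mul, mul_pow,
    Real.sq_sqrt hδ] at hcs
  linarith

lemma intervalIntegral_le_mul_of_slice_bounds {G : ℝ × ℝ → ℝ} {φ : ℝ → ℝ} {a b c d M : ℝ}
    (hab : a ≤ b) (hcd : c ≤ d) (hG : ContinuousOn G (Icc a b ×ˢ Icc c d))
    (hφ : ContinuousOn φ (Icc c d)) (hlower : ∀ y ∈ Icc c d, φ y ≤ ∫ x in a..b, G (x, y))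
    (hupper : ∀ x ∈ Icc a b, ∫ y in c..d, G (x, y) ≤ M) :
    ∫ y in c..d, φ y ≤ (b - a) * M := by
  have hint : Integrable G ((volume.restrict (Ioc a b)).prod (volume.restrict (Ioc c d))) := by
    rw [Measure.prod_restrict]
    exact (hG.integrableOn_compact (isCompact_Icc.prod isCompact_Icc)).mono_set
      (prod_mono Ioc_subset_Icc_self Ioc_subset_Icc_self)
  have hswap : ∫ x in a..b, ∫ y in c..d, G (x, y) = ∫ y in c..d, ∫ x in a..b, G (x, y) :=
    intervalIntegral_intervalIntegral_swap (F := fun x y => G (x, y)) <| by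
      rwa [uIoc_of_le hab, uIoc_of_le hcd, IntegrableOn, Measure.volume_eq_prod,
        ← Measure.prod_restrict]
  have hinner : IntervalIntegrable (fun y => ∫ x in a..b, G (x, y)) volume c d := by
    simpa only [intervalIntegrable_iff_integrableOn_Ioc_of_le hcd,
      intervalIntegral.integral_of_le hab] using! hint.integral_prod_right
  have houter : IntervalIntegrable (fun x => ∫ y in c..d, G (x, y)) volume a b := by
    simpa only [intervalIntegrable_iff_integrableOn_Ioc_of_le hab,
      intervalIntegral.integral_of_le hcd] using! hint.integral_prod_left
  calc ∫ y in c..d, φ y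
      ≤ ∫ y in c..d, ∫ x in a..b, G (x, y) :=
        intervalIntegral.integral_mono_on hcd (hφ.intervalIntegrable_of_Icc hcd) hinner hlower
    _ = ∫ x in a..b, ∫ y in c..d, G (x, y) := hswap.symm
    _ ≤ ∫ _ in a..b, M :=
        intervalIntegral.integral_mono_on hab houter intervalIntegrable_const hupper
    _ = (b - a) * M := by rw [intervalIntegral.integral_const, smul_eq_mul]

lemma integral_inv_add_mul {m b l : ℝ} (hm : 0 < m) (hb : 0 < b) (hl : 0 ≤ l) :
    ∫ s in (0 : ℝ)..l, (m + b * s)⁻¹ = b⁻¹ * Real.log ((m + b * l) / m) := by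
  rw [intervalIntegral.integral_comp_add_mul (fun s => s⁻¹) hb.ne', mul_zero, add_zero,
    integral_inv_of_pos hm (by positivity), smul_eq_mul]

end Integrals

lemma hasDerivAt_sub_le_of_convexOn {S : Set ℝ} {f : ℝ → ℝ} {x y h K f'x f'y : ℝ}
    (hf : ConvexOn ℝ S f) (hh : 0 < h) (hxh : x - h ∈ S) (hx : x ∈ S) (hy : y ∈ S)
    (hyh : y + h ∈ S) (hfx : HasDerivAt f f'x x) (hfy : HasDerivAt f f'y y)
    (hbound : ∀ s ∈ S, f s ∈ Icc 0 K) : f'y - f'x ≤ 2 * K / h := by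
  have hright : f'y ≤ K / h := by
    refine (hf.le_slope_of_hasDerivAt hy hyh (by linarith) hfy).trans ?_
    rw [slope_def_field, add_sub_cancel_left]
    gcongr
    linarith [(hbound y hy).1, (hbound _ hyh).2]
  have hleft : -(K / h) ≤ f'x := by
    refine le_trans ?_ (hf.slope_le_of_hasDerivAt hxh hx (by linarith) hfx)
    rw [slope_def_field, sub_sub_cancel, ← neg_div]
    gcongr
    linarith [(hbound x hx).1, (hbound _ hxh).2]
  calc f'y - f'x ≤ K / h - -(K / h) := sub_le_sub hright hleft
    _ = 2 * K / h := by ring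

section Rectangle

variable {E : Type*} [NormedAddCommGroup E] [NormedSpace ℝ E] {u : E → ℝ} {Ω : Set E}
  {e f : E} {δ h : ℝ}

lemma integral_secondDirDeriv_le_of_convexOn (hΩ : IsOpen Ω) (hu : ContDiffOn ℝ 2 u Ω)
    (hconv : ConvexOn ℝ Ω u) (hh : 0 < h) {p : E} {K : ℝ}
    (hp : ∀ s ∈ Icc 0 (3 * h), p + s • e ∈ Ω)
    (hbound : ∀ s ∈ Icc 0 (3 * h), u (p + s • e) ∈ Icc 0 K) :
    ∫ s in h..(2 * h), secondDirDeriv u (p + s • e) e ≤ 2 * K / h := by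
  have hle : h ≤ 2 * h := by linarith
  have hmid : Icc h (2 * h) ⊆ Icc 0 (3 * h) := Icc_subset_Icc hh.le (by linarith)
  have hderiv : ∀ s ∈ Icc h (2 * h),
      HasDerivAt (fun r : ℝ => u (p + r • e)) (fderiv ℝ u (p + s • e) e) s := fun s hs =>
    hasDerivAt_comp_line ((hu.differentiableOn (by norm_num)).differentiableAt
      (hΩ.mem_nhds (hp s (hmid hs))))
  have hderiv' : ∀ s ∈ Icc h (2 * h), HasDerivAt (fun r : ℝ => fderiv ℝ u (p + r • e) e)
      (secondDirDeriv u (p + s • e) e) s := fun s hs =>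
    hasDerivAt_fderiv_comp_line ((differentiableOn_fderiv_of_contDiffOn_two hΩ hu).differentiableAt
      (hΩ.mem_nhds (hp s (hmid hs))))
  have hcont : ContinuousOn (fun s : ℝ => secondDirDeriv u (p + s • e) e) (Icc h (2 * h)) :=
    (continuousOn_secondDirDeriv hΩ hu e).comp (by fun_prop) fun s hs => hp s (hmid hs)
  rw [intervalIntegral.integral_eq_sub_of_hasDerivAt
    (fun s hs => hderiv' s (uIcc_of_le hle ▸ hs)) (hcont.intervalIntegrable_of_Icc hle)]
  exact hasDerivAt_sub_le_of_convexOn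
    ((convexOn_comp_line hconv p e).subset hp (convex_Icc 0 (3 * h))) hh
    ⟨by linarith, by linarith⟩ (hmid (left_mem_Icc.2 hle)) (hmid (right_mem_Icc.2 hle))
    ⟨by linarith, by linarith⟩ (hderiv h (left_mem_Icc.2 hle))
    (hderiv (2 * h) (right_mem_Icc.2 hle)) hbound

lemma le_integral_secondDirDeriv_of_le_mul (hΩ : IsOpen Ω) (hu : ContDiffOn ℝ 2 u Ω)
    (hconv : ConvexOn ℝ Ω u) (hδ : 0 ≤ δ) (hh : 0 < h) {p : E} {K : ℝ} (hK : 0 < K)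
    (hp : ∀ s ∈ Icc 0 (3 * h), p + s • e ∈ Ω)
    (hbound : ∀ s ∈ Icc 0 (3 * h), u (p + s • e) ∈ Icc 0 K)
    (hdet : ∀ s ∈ Icc 0 (3 * h),
      δ ≤ secondDirDeriv u (p + s • e) e * secondDirDeriv u (p + s • e) f) :
    δ * h ^ 3 / 2 * K⁻¹ ≤ ∫ s in h..(2 * h), secondDirDeriv u (p + s • e) f := by
  have hle : h ≤ 2 * h := by linarith
  have hmid : Icc h (2 * h) ⊆ Icc 0 (3 * h) := Icc_subset_Icc hh.le (by linarith)
  have hcont : ∀ v, ContinuousOn (fun s : ℝ => secondDirDeriv u (p + s • e) v) (Icc h (2 * h)) :=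
    fun v => (continuousOn_secondDirDeriv hΩ hu v).comp (by fun_prop) fun s hs => hp s (hmid hs)
  have hnonneg : ∀ v, ∀ s ∈ Icc h (2 * h), 0 ≤ secondDirDeriv u (p + s • e) v := fun v s hs =>
    secondDirDeriv_nonneg_of_convexOn hΩ hconv (hu.differentiableOn (by norm_num))
      (hp s (hmid hs)) ((differentiableOn_fderiv_of_contDiffOn_two hΩ hu).differentiableAt
        (hΩ.mem_nhds (hp s (hmid hs)))) v
  set I := ∫ s in h..(2 * h), secondDirDeriv u (p + s • e) f
  have hI : 0 ≤ I := intervalIntegral.integral_nonneg hle (hnonneg f)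
  have hcauchySchwarz : δ * h ^ 2 ≤ 2 * K / h * I := by
    calc δ * h ^ 2 = δ * (2 * h - h) ^ 2 := by ring
      _ ≤ (∫ s in h..(2 * h), secondDirDeriv u (p + s • e) e) * I :=
        mul_sq_sub_le_integral_mul_integral hle hδ (hcont e) (hcont f) (hnonneg e) (hnonneg f)
          fun s hs => hdet s (hmid hs)
      _ ≤ 2 * K / h * I := by
        gcongr
        exact integral_secondDirDeriv_le_of_convexOn hΩ hu hconv hh hp hbound
  calc δ * h ^ 3 / 2 * K⁻¹ = δ * h ^ 2 * (h / (2 * K)) := by field_simp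
    _ ≤ 2 * K / h * I * (h / (2 * K)) := by gcongr
    _ = I := by field_simp

lemma le_add_mul_of_abs_fderiv_le (hΩ : IsOpen Ω) (hu : DifferentiableOn ℝ u Ω) {p : E} {b l : ℝ}
    (hp : ∀ s ∈ Icc 0 l, p + s • f ∈ Ω) (hb : ∀ s ∈ Icc 0 l, |fderiv ℝ u (p + s • f) f| ≤ b) :
    ∀ s ∈ Icc 0 l, u (p + s • f) ≤ u p + b * s := by
  intro s hs
  have hmvt := norm_image_sub_le_of_norm_deriv_le_segment' (f := fun r : ℝ => u (p + r • f))
    (fun r hr => (hasDerivAt_comp_line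
      (hu.differentiableAt (hΩ.mem_nhds (hp r hr)))).hasDerivWithinAt)
    (fun r hr => hb r (Ico_subset_Icc_self hr)) s hs
  simp only [zero_smul, add_zero, sub_zero] at hmvt
  linarith [(abs_le.1 hmvt).2]

lemma integral_secondDirDeriv_le_two_mul (hΩ : IsOpen Ω) (hu : ContDiffOn ℝ 2 u Ω) {p : E}
    {b l : ℝ} (hl : 0 ≤ l) (hp : ∀ s ∈ Icc 0 l, p + s • f ∈ Ω)
    (hb : ∀ s ∈ Icc 0 l, |fderiv ℝ u (p + s • f) f| ≤ b) :
    ∫ s in (0 : ℝ)..l, secondDirDeriv u (p + s • f) f ≤ 2 * b := by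
  have hcont : ContinuousOn (fun s : ℝ => secondDirDeriv u (p + s • f) f) (Icc 0 l) :=
    (continuousOn_secondDirDeriv hΩ hu f).comp (by fun_prop) hp
  rw [intervalIntegral.integral_eq_sub_of_hasDerivAt
    (fun s hs => hasDerivAt_fderiv_comp_line
      ((differentiableOn_fderiv_of_contDiffOn_two hΩ hu).differentiableAt
        (hΩ.mem_nhds (hp s (uIcc_of_le hl ▸ hs))))) (hcont.intervalIntegrable_of_Icc hl)]
  linarith [(abs_le.1 (hb l (right_mem_Icc.2 hl))).2, (abs_le.1 (hb 0 (left_mem_Icc.2 hl))).1]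

lemma inv_add_mul_le_integral_secondDirDeriv (hΩ : IsOpen Ω) (hu : ContDiffOn ℝ 2 u Ω)
    (hconv : ConvexOn ℝ Ω u) (hδ : 0 ≤ δ) (hh : 0 < h) {b l m : ℝ} (hb0 : 0 ≤ b) (hm : 0 < m)
    (hR : ∀ x ∈ Icc 0 (3 * h), ∀ y ∈ Icc 0 l, x • e + y • f ∈ Ω) (hnonneg : ∀ x ∈ Ω, 0 ≤ u x)
    (hdet : ∀ x ∈ Ω, δ ≤ secondDirDeriv u x e * secondDirDeriv u x f)
    (hb : ∀ x ∈ Ω, |fderiv ℝ u x f| ≤ b) (hbottom : ∀ x ∈ Icc 0 (3 * h), u (x • e) ≤ m) :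
    ∀ y ∈ Icc 0 l, δ * h ^ 3 / 2 * (m + b * y)⁻¹ ≤
      ∫ x in h..(2 * h), secondDirDeriv u (x • e + y • f) f := by
  intro y hy
  have hrow : ∀ x ∈ Icc 0 (3 * h), y • f + x • e ∈ Ω := fun x hx => by
    simpa only [add_comm] using hR x hx y hy
  have hgrowth : ∀ x ∈ Icc 0 (3 * h), u (y • f + x • e) ≤ m + b * y := fun x hx => by
    rw [add_comm]
    linarith [hbottom x hx, le_add_mul_of_abs_fderiv_le hΩ (hu.differentiableOn (by norm_num))
      (hR x hx) (fun s hs => hb _ (hR x hx s hs)) y hy]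
  simpa only [add_comm] using le_integral_secondDirDeriv_of_le_mul hΩ hu hconv hδ hh
    (add_pos_of_pos_of_nonneg hm (mul_nonneg hb0 hy.1)) hrow
    (fun x hx => ⟨hnonneg _ (hrow x hx), hgrowth x hx⟩) (fun x hx => hdet _ (hrow x hx))

lemma log_le_of_le_mul_secondDirDeriv (hΩ : IsOpen Ω) (hu : ContDiffOn ℝ 2 u Ω)
    (hconv : ConvexOn ℝ Ω u) (hδ : 0 < δ) (hh : 0 < h) {b l m : ℝ} (hb0 : 0 < b) (hl : 0 ≤ l)
    (hm : 0 < m) (hR : ∀ x ∈ Icc 0 (3 * h), ∀ y ∈ Icc 0 l, x • e + y • f ∈ Ω)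
    (hnonneg : ∀ x ∈ Ω, 0 ≤ u x)
    (hdet : ∀ x ∈ Ω, δ ≤ secondDirDeriv u x e * secondDirDeriv u x f)
    (hb : ∀ x ∈ Ω, |fderiv ℝ u x f| ≤ b) (hbottom : ∀ x ∈ Icc 0 (3 * h), u (x • e) ≤ m) :
    Real.log ((m + b * l) / m) ≤ 4 * b ^ 2 / (δ * h ^ 2) := by
  have hpos : ∀ y ∈ Icc 0 l, 0 < m + b * y := fun y hy => by nlinarith [hy.1]
  have hmid : Icc h (2 * h) ⊆ Icc 0 (3 * h) := Icc_subset_Icc (by linarith) (by linarith)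
  have hcont : ContinuousOn (fun z : ℝ × ℝ => secondDirDeriv u (z.1 • e + z.2 • f) f)
      (Icc h (2 * h) ×ˢ Icc 0 l) :=
    (continuousOn_secondDirDeriv hΩ hu f).comp (by fun_prop)
      fun z hz => hR z.1 (hmid hz.1) z.2 hz.2
  have hfubini : ∫ y in (0 : ℝ)..l, δ * h ^ 3 / 2 * (m + b * y)⁻¹ ≤ (2 * h - h) * (2 * b) :=
    intervalIntegral_le_mul_of_slice_bounds (by linarith) hl hcont
      (continuousOn_const.mul
        (ContinuousOn.inv₀ (by fun_prop) fun y hy => (hpos y hy).ne'))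
      (inv_add_mul_le_integral_secondDirDeriv hΩ hu hconv hδ.le hh hb0.le hm hR hnonneg hdet hb
        hbottom)
      fun x hx => integral_secondDirDeriv_le_two_mul hΩ hu hl (hR x (hmid hx))
        fun y hy => hb _ (hR x (hmid hx) y hy)
  rw [intervalIntegral.integral_const_mul, integral_inv_add_mul hm hb0 hl] at hfubini
  calc Real.log ((m + b * l) / m)
      = δ * h ^ 3 / 2 * (b⁻¹ * Real.log ((m + b * l) / m)) * (2 * b / (δ * h ^ 3)) := by
        field_simp
    _ ≤ (2 * h - h) * (2 * b) * (2 * b / (δ * h ^ 3)) := by gcongr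
    _ = 4 * b ^ 2 / (δ * h ^ 2) := by field_simp; ring

lemma mul_le_mul_exp_sub_one_of_le_mul_secondDirDeriv (hΩ : IsOpen Ω) (hu : ContDiffOn ℝ 2 u Ω)
    (hconv : ConvexOn ℝ Ω u) (hδ : 0 < δ) (hh : 0 < h) {b l m : ℝ} (hb0 : 0 ≤ b) (hl : 0 ≤ l)
    (hR : ∀ x ∈ Icc 0 (3 * h), ∀ y ∈ Icc 0 l, x • e + y • f ∈ Ω) (hnonneg : ∀ x ∈ Ω, 0 ≤ u x)
    (hdet : ∀ x ∈ Ω, δ ≤ secondDirDeriv u x e * secondDirDeriv u x f)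
    (hb : ∀ x ∈ Ω, |fderiv ℝ u x f| ≤ b) (hm : 0 ≤ m)
    (hbottom : ∀ x ∈ Icc 0 (3 * h), u (x • e) ≤ m) :
    b * l ≤ m * (Real.exp (4 * b ^ 2 / (δ * h ^ 2)) - 1) := by
  rcases hb0.eq_or_lt with rfl | hb0
  · simp
  have hexp : 0 < Real.exp (4 * b ^ 2 / (δ * h ^ 2)) - 1 :=
    sub_pos.2 (Real.one_lt_exp_iff.2 (by positivity))
  rw [← div_le_iff₀ hexp]
  -- The logarithmic estimate needs a positive bound, so it is applied to every `m' > m`.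
  refine le_of_forall_gt_imp_ge_of_dense fun m' hm' => ?_
  have hm'0 : 0 < m' := hm.trans_lt hm'
  have hlog := log_le_of_le_mul_secondDirDeriv hΩ hu hconv hδ hh hb0 hl hm'0 hR hnonneg hdet hb
    fun x hx => (hbottom x hx).trans hm'.le
  rw [Real.log_le_iff_le_exp (by positivity), div_le_iff₀ hm'0] at hlog
  rw [div_le_iff₀ hexp]
  linarith

end Rectangle

lemma apply_smul_le_of_convexOn {E : Type*} [AddCommGroup E] [Module ℝ E] {s : Set E} {u : E → ℝ}
    {t x : ℝ} {v : E} (hconv : ConvexOn ℝ s u) (ht : 0 < t) (h0 : 0 ∈ s) (htv : t • v ∈ s)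
    (hu : u 0 ≤ u (t • v)) (hx : x ∈ Icc 0 t) : u (x • v) ≤ u (t • v) := by
  have hmem : x • v ∈ segment ℝ 0 (t • v) :=
    ⟨1 - x / t, x / t, sub_nonneg.2 ((div_le_one ht).2 hx.2), div_nonneg hx.1 ht.le, by ring,
      by rw [smul_zero, zero_add, smul_smul, div_mul_cancel₀ x ht.ne']⟩
  exact (hconv.le_on_segment h0 htv hmem).trans_eq (max_eq_right hu)

lemma add_smul_mem_ball_of_orthonormal {E : Type*} [NormedAddCommGroup E] [InnerProductSpace ℝ E]
    {w : Fin 2 → E} (hw : Orthonormal ℝ w) {t x y : ℝ} (ht : 0 ≤ t) (hxy : x ^ 2 + y ^ 2 < t ^ 2) :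
    x • w 0 + y • w 1 ∈ ball (0 : E) t := by
  have hinner : inner ℝ (x • w 0) (y • w 1) = 0 := by
    rw [inner_smul_left, inner_smul_right, hw.2 (by decide), mul_zero, mul_zero]
  have hnorm := norm_add_sq_eq_norm_sq_add_norm_sq_of_inner_eq_zero _ _ hinner
  simp only [norm_smul, hw.1, mul_one, Real.norm_eq_abs, abs_mul_abs_self] at hnorm
  rw [mem_ball_zero_iff]
  exact lt_of_pow_lt_pow_left₀ 2 ht (by linarith)

lemma pt_zero_eq_smul (a : ℝ) : pt a 0 = a • e2 0 := by
  ext i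
  fin_cases i <;> simp [pt, e2]

lemma detHess_le_mul_secondDirDeriv {u : E2 → ℝ} {x : E2} (hu : ContDiffAt ℝ 2 u x) :
    detHess u x ≤ secondDirDeriv u x (e2 0) * secondDirDeriv u x (e2 1) := by
  have hsymm : fderiv ℝ (fderiv ℝ u) x (e2 0) (e2 1) = fderiv ℝ (fderiv ℝ u) x (e2 1) (e2 0) :=
    hu.isSymmSndFDerivAt (by simp) _ _
  simp only [detHess, hess, secondDirDeriv, Matrix.det_fin_two, Matrix.of_apply,
    iteratedFDeriv_two_apply, Matrix.cons_val_zero, Matrix.cons_val_one, hsymm]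
  linarith [mul_self_nonneg (fderiv ℝ (fderiv ℝ u) x (e2 1) (e2 0))]

lemma abs_fderiv_le_norm_gradient {E : Type*} [NormedAddCommGroup E] [InnerProductSpace ℝ E]
    [CompleteSpace E] (u : E → ℝ) (x : E) {v : E} (hv : ‖v‖ = 1) :
    |fderiv ℝ u x v| ≤ ‖gradient u x‖ := by
  simpa [inner_gradient_left, hv] using abs_real_inner_le_norm (gradient u x) v

/-- The bound is a product because at `b = 0` the quotient would be the junk value `0 / 0`. -/
theorem modulus_of_convexity_lower_bound_general {E : Type*} [NormedAddCommGroup E]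
    [InnerProductSpace ℝ E] {w : Fin 2 → E} (hw : Orthonormal ℝ w) {t C₀ b : ℝ} (ht : 0 < t)
    (hC₀ : 0 < C₀) {u : E → ℝ} (hu : ContDiffOn ℝ 2 u (ball 0 t))
    (hconv : ConvexOn ℝ (closedBall 0 t) u) (hu0 : u 0 = 0)
    (hnonneg : ∀ x ∈ closedBall 0 t, 0 ≤ u x)
    (hdet : ∀ x ∈ ball 0 t, C₀⁻¹ ≤ secondDirDeriv u x (w 0) * secondDirDeriv u x (w 1))
    (hb : ∀ x ∈ ball 0 t, |fderiv ℝ u x (w 1)| ≤ b) :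
    b * t / 2 ≤ u (t • w 0) * (Real.exp (64 * C₀ * b ^ 2 / t ^ 2) - 1) := by
  have htw : t • w 0 ∈ closedBall 0 t := by simp [norm_smul, hw.1, abs_of_pos ht]
  have hR : ∀ x ∈ Icc 0 (3 * (t / 4)), ∀ y ∈ Icc 0 (t / 2), x • w 0 + y • w 1 ∈ ball 0 t :=
    fun x hx y hy => add_smul_mem_ball_of_orthonormal hw ht.le (by
      nlinarith [pow_le_pow_left₀ hx.1 hx.2 2, pow_le_pow_left₀ hy.1 hy.2 2])
  have hrect := mul_le_mul_exp_sub_one_of_le_mul_secondDirDeriv isOpen_ball hu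
    (hconv.subset ball_subset_closedBall (convex_ball 0 t)) (inv_pos.2 hC₀) (h := t / 4)
    (by positivity) ((abs_nonneg _).trans (hb 0 (mem_ball_self ht))) (by positivity) hR
    (fun x hx => hnonneg x (ball_subset_closedBall hx)) hdet hb (hnonneg _ htw)
    fun x hx => apply_smul_le_of_convexOn hconv ht (mem_closedBall_self ht.le) htw
      (hu0.trans_le (hnonneg _ htw)) ⟨hx.1, by linarith [hx.2]⟩
  have hexponent : 4 * b ^ 2 / (C₀⁻¹ * (t / 4) ^ 2) = 64 * C₀ * b ^ 2 / t ^ 2 := by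
    field_simp
    ring
  rwa [hexponent, ← mul_div_assoc] at hrect

/-- Lemma 2.6, lower bound for the modulus of convexity:
if u is C² and convex on a neighborhood of the closed disc B̄_t(0), with
det D²u ≥ C₀⁻¹ > 0, u(0) = 0, Du(0) = 0, u > 0 away from the origin, the minimum
m of u over ∂B_t(0) is attained at (t,0), and b bounds |Du| on B̄_t(0), then
m ≥ (bt/2)/(exp(128 C₀ b²/t²) − 1). -/
theorem modulus_of_convexity_lower_bound
    (t C₀ b : ℝ) (ht : 0 < t) (hC₀ : 0 < C₀)
    (u : E2 → ℝ) (U : Set E2) (hU : IsOpen U) (hUt : closedBall (0:E2) t ⊆ U)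
    (hu : ContDiffOn ℝ 2 u U)
    (hconv : ConvexOn ℝ (closedBall (0:E2) t) u)
    (hdet : ∀ x ∈ closedBall (0:E2) t, C₀⁻¹ ≤ detHess u x)
    (hu0 : u 0 = 0)
    (hDu0 : gradient u 0 = 0)
    (hpos : ∀ x ∈ closedBall (0:E2) t, x ≠ 0 → 0 < u x)
    (hmin : ∀ x ∈ sphere (0:E2) t, u (pt t 0) ≤ u x)
    (hb : ∀ x ∈ closedBall (0:E2) t, ‖gradient u x‖ ≤ b) :
    u (pt t 0) ≥ (b * t / 2) / (Real.exp (128 * C₀ * b ^ 2 / t ^ 2) - 1) := by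
  have hw : Orthonormal ℝ e2 := EuclideanSpace.orthonormal_single
  have hball : ball (0 : E2) t ⊆ U := ball_subset_closedBall.trans hUt
  have hnonneg : ∀ x ∈ closedBall (0 : E2) t, 0 ≤ u x := fun x hx =>
    (eq_or_ne x 0).elim (fun h => h ▸ hu0.ge) fun h => (hpos x hx h).le
  have hsharp := modulus_of_convexity_lower_bound_general hw ht hC₀ (hu.mono hball) hconv hu0
    hnonneg
    (fun x hx => (hdet x (ball_subset_closedBall hx)).trans
      (detHess_le_mul_secondDirDeriv (hu.contDiffAt (hU.mem_nhds (hball hx)))))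
    fun x hx => (abs_fderiv_le_norm_gradient u x (hw.1 1)).trans (hb x (ball_subset_closedBall hx))
  have hm : 0 ≤ u (pt t 0) := hnonneg _ (by simp [pt_zero_eq_smul, norm_smul, hw.1, abs_of_pos ht])
  rw [← pt_zero_eq_smul] at hsharp
  refine div_le_of_le_mul₀ (sub_nonneg.2 (Real.one_le_exp (by positivity))) hm (hsharp.trans ?_)
  gcongr
  norm_num
end
end
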